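/- Let $n \ge 1$, let $a, b$ be nonzero $n \times n$ complex matrices, let $p > 1$ and $q > 1$ satisfy $1/p + 1/q = 1$. If $\|a b^*\|_1 = \|a\|_p \, \|b\|_q$, then $|a|$ commutes with $|b|$, i.e. $|a| \cdot |b| = |b| \cdot |a|$. -/

import Mathlib

open Matrix
open scoped ComplexOrder

open scoped MatrixOrder in
/-- `matAbs x` is `|x|`, the unique positive semidefinite square root of `xᴴ * x`. -/
noncomputable def matAbs {n : ℕ} (x : Matrix (Fin n) (Fin n) ℂ) : Matrix (Fin n) (Fin n) ℂ :=
  CFC.sqrt (xᴴ * x)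

/-- `matRpow x r` is the real power `x ^ r` defined via the continuous functional calculus. -/
noncomputable def matRpow {n : ℕ} (x : Matrix (Fin n) (Fin n) ℂ) (r : ℝ) :
    Matrix (Fin n) (Fin n) ℂ :=
  cfc (fun t : ℝ => t ^ r) x

/-- The Schatten `r`-norm `(Tr(|x|^r))^(1/r)`. -/
noncomputable def schatten {n : ℕ} (r : ℝ) (x : Matrix (Fin n) (Fin n) ℂ) : ℝ :=
  (Matrix.trace (matRpow (matAbs x) r)).re ^ (1 / r)

/-!
Write `a = U|a|`, `b = V|b|` and `ab* = W|ab*|` with `U`, `V`, `W` unitary. By cyclicity,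
`‖ab*‖₁ = Tr(|a||b|T)` for a unitary `T`. Expanding this trace in eigenbases of `|a|` and `|b|`,
with eigenvalues `αᵢ` and `βⱼ`, and using `2|st| ≤ |s|² + |t|²` on the entries of the two unitary
matrices that appear, bounds it by `∑ Mᵢⱼ αᵢ βⱼ` with `M` doubly stochastic. Young's inequality
then gives Hölder's inequality, and if equality holds, `αᵢᵖ / ‖a‖ₚᵖ = βⱼ^q / ‖b‖_q^q` whenever the
`i`-th and `j`-th eigenvectors are not orthogonal. Hence `|a|ᵖ` is a multiple of `|b|^q`, and
`|a|`, a function of `|a|ᵖ`, commutes with `|b|`.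
-/

section LinearIsometry

variable {𝕜 E F : Type*} [RCLike 𝕜] [AddCommGroup E] [Module 𝕜 E]
  [NormedAddCommGroup F] [InnerProductSpace 𝕜 F] [FiniteDimensional 𝕜 F]

lemma exists_linearIsometry_comp_eq_of_norm_eq {f g : E →ₗ[𝕜] F} (h : ∀ x, ‖f x‖ = ‖g x‖) :
    ∃ L : F →ₗᵢ[𝕜] F, ∀ x, L (g x) = f x := by
  obtain ⟨s, hs⟩ := g.rangeRestrict.exists_rightInverse_of_surjective g.range_rangeRestrict
  have g_s (y : g.range) : g (s y) = y := congrArg Subtype.val (LinearMap.congr_fun hs y)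
  let L₀ : g.range →ₗᵢ[𝕜] F := ⟨f ∘ₗ s, fun y ↦ by
    rw [LinearMap.comp_apply, h, g_s, Submodule.coe_norm]⟩
  refine ⟨L₀.extend, fun x ↦ ?_⟩
  have hx : L₀.extend (g x) = f (s ⟨g x, x, rfl⟩) := L₀.extend_apply ⟨g x, x, rfl⟩
  rw [hx, ← sub_eq_zero, ← map_sub, ← norm_eq_zero, h, map_sub, g_s, sub_self, norm_zero]

end LinearIsometry

section DoublyStochastic

open Real

variable {n : Type*} [Fintype n] {α β : n → ℝ} {p q : ℝ}

lemma div_rpow_inv_rpow {t c r : ℝ} (ht : 0 ≤ t) (hc : 0 ≤ c) (hr : r ≠ 0) :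
    (t / c ^ r⁻¹) ^ r = t ^ r / c := by
  rw [div_rpow ht (rpow_nonneg hc _), rpow_inv_rpow hc hr]

lemma sum_div_rpow_inv_rpow_eq_one (hα : ∀ i, 0 ≤ α i) (hp : p ≠ 0) (h : 0 < ∑ i, α i ^ p) :
    ∑ i, (α i / (∑ k, α k ^ p) ^ p⁻¹) ^ p = 1 := by
  simp only [div_rpow_inv_rpow (hα _) h.le hp, ← Finset.sum_div]
  exact div_self h.ne'

variable [DecidableEq n] {M : Matrix n n ℝ}

lemma sum_sum_mul_add_of_mem_doublyStochastic (hM : M ∈ doublyStochastic ℝ n) (x y : n → ℝ) :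
    ∑ i, ∑ j, M i j * (x i + y j) = ∑ i, x i + ∑ j, y j := by
  simp only [mul_add, Finset.sum_add_distrib]
  rw [Finset.sum_comm (f := fun i j ↦ M i j * y j)]
  simp only [← Finset.sum_mul, sum_row_of_mem_doublyStochastic hM,
    sum_col_of_mem_doublyStochastic hM, one_mul]

lemma rpow_eq_rpow_of_one_le_sum_mul (hM : M ∈ doublyStochastic ℝ n)
    (hpq : p.HolderConjugate q) (hα : ∀ i, 0 ≤ α i) (hβ : ∀ j, 0 ≤ β j)
    (hα_sum : ∑ i, α i ^ p = 1) (hβ_sum : ∑ j, β j ^ q = 1)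
    (h : 1 ≤ ∑ i, ∑ j, M i j * (α i * β j)) {i j : n} (hij : M i j ≠ 0) :
    α i ^ p = β j ^ q := by
  have young (i j : n) : M i j * (α i * β j) ≤ M i j * (α i ^ p / p + β j ^ q / q) :=
    mul_le_mul_of_nonneg_left (young_inequality_of_nonneg (hα i) (hβ j) hpq)
      (nonneg_of_mem_doublyStochastic hM)
  have sum_young : ∑ i, ∑ j, M i j * (α i ^ p / p + β j ^ q / q) = 1 := by
    rw [sum_sum_mul_add_of_mem_doublyStochastic hM, ← Finset.sum_div, ← Finset.sum_div, hα_sum,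
      hβ_sum, one_div, one_div, hpq.inv_add_inv_eq_one]
  have sum_eq : ∑ i, ∑ j, M i j * (α i * β j) =
      ∑ i, ∑ j, M i j * (α i ^ p / p + β j ^ q / q) :=
    le_antisymm (Finset.sum_le_sum fun i _ ↦ Finset.sum_le_sum fun j _ ↦ young i j)
      (sum_young.trans_le h)
  simp only [← Finset.sum_product'] at sum_eq
  have young_eq := (Finset.sum_eq_sum_iff_of_le fun ij _ ↦ young ij.1 ij.2).1 sum_eq (i, j)
    (Finset.mem_univ _)
  exact (young_inequality_eq_iff_of_nonneg (hα i) (hβ j) hpq).1 (mul_left_cancel₀ hij young_eq)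

lemma sum_rpow_mul_rpow_eq_of_le_sum_mul_of_pos (hM : M ∈ doublyStochastic ℝ n)
    (hpq : p.HolderConjugate q) (hα : ∀ i, 0 ≤ α i) (hβ : ∀ j, 0 ≤ β j)
    (hα_pos : 0 < ∑ i, α i ^ p) (hβ_pos : 0 < ∑ j, β j ^ q)
    (h : (∑ i, α i ^ p) ^ p⁻¹ * (∑ j, β j ^ q) ^ q⁻¹ ≤ ∑ i, ∑ j, M i j * (α i * β j))
    {i j : n} (hij : M i j ≠ 0) :
    (∑ l, β l ^ q) * α i ^ p = (∑ k, α k ^ p) * β j ^ q := by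
  have hα_sum := sum_div_rpow_inv_rpow_eq_one hα hpq.ne_zero hα_pos
  have hβ_sum := sum_div_rpow_inv_rpow_eq_one hβ hpq.symm.ne_zero hβ_pos
  set P := ∑ i, α i ^ p
  set Q := ∑ j, β j ^ q
  have normalized_le : 1 ≤ ∑ i, ∑ j, M i j * (α i / P ^ p⁻¹ * (β j / Q ^ q⁻¹)) := by
    simp only [div_mul_div_comm]
    simp only [← mul_div_assoc, ← Finset.sum_div]
    exact (one_le_div (by positivity)).2 h
  have normalized_eq := rpow_eq_rpow_of_one_le_sum_mul hM hpq
    (fun i ↦ div_nonneg (hα i) (by positivity)) (fun j ↦ div_nonneg (hβ j) (by positivity))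
    hα_sum hβ_sum normalized_le hij
  rw [div_rpow_inv_rpow (hα i) hα_pos.le hpq.ne_zero,
    div_rpow_inv_rpow (hβ j) hβ_pos.le hpq.symm.ne_zero,
    div_eq_div_iff hα_pos.ne' hβ_pos.ne'] at normalized_eq
  rw [mul_comm, normalized_eq, mul_comm]

lemma sum_rpow_mul_rpow_eq_of_le_sum_mul (hM : M ∈ doublyStochastic ℝ n)
    (hpq : p.HolderConjugate q) (hα : ∀ i, 0 ≤ α i) (hβ : ∀ j, 0 ≤ β j)
    (h : (∑ i, α i ^ p) ^ p⁻¹ * (∑ j, β j ^ q) ^ q⁻¹ ≤ ∑ i, ∑ j, M i j * (α i * β j))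
    {i j : n} (hij : M i j ≠ 0) :
    (∑ l, β l ^ q) * α i ^ p = (∑ k, α k ^ p) * β j ^ q := by
  have pos_or_rpow_eq_zero {γ : n → ℝ} {r : ℝ} (hγ : ∀ i, 0 ≤ γ i) (k : n) :
      0 < ∑ i, γ i ^ r ∨ γ k ^ r = 0 ∧ ∑ i, γ i ^ r = 0 := by
    have hγ_rpow : ∀ i ∈ Finset.univ, 0 ≤ γ i ^ r := fun i _ ↦ rpow_nonneg (hγ i) r
    refine (Finset.sum_nonneg hγ_rpow).lt_or_eq.imp_right fun h_sum ↦ ⟨?_, h_sum.symm⟩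
    exact (Finset.sum_eq_zero_iff_of_nonneg hγ_rpow).1 h_sum.symm k (Finset.mem_univ k)
  obtain hα_pos | ⟨hα_zero, hα_sum⟩ := pos_or_rpow_eq_zero (r := p) hα i
  · obtain hβ_pos | ⟨hβ_zero, hβ_sum⟩ := pos_or_rpow_eq_zero (r := q) hβ j
    · exact sum_rpow_mul_rpow_eq_of_le_sum_mul_of_pos hM hpq hα hβ hα_pos hβ_pos h hij
    · rw [hβ_zero, hβ_sum, zero_mul, mul_zero]
  · rw [hα_zero, hα_sum, zero_mul, mul_zero]

end DoublyStochastic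

section Commute

variable {A : Type*} [PartialOrder A] [Ring A] [StarRing A] [TopologicalSpace A]
  [StarOrderedRing A] [Algebra ℝ A] [ContinuousFunctionalCalculus ℝ A IsSelfAdjoint]
  [NonnegSpectrumClass ℝ A] [IsTopologicalRing A] [T2Space A] {a b : A} {p q c d : ℝ}

lemma commute_of_commute_rpow (hp : 0 < p) (ha : 0 ≤ a) (h : Commute (a ^ p) b) :
    Commute a b := by
  have root_commute : Commute ((a ^ p) ^ p⁻¹) b := h.cfc_nnreal _
  rwa [CFC.rpow_rpow_of_exponent_nonneg a p p⁻¹ hp.le (inv_nonneg.2 hp.le),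
    mul_inv_cancel₀ hp.ne', CFC.rpow_one a] at root_commute

lemma commute_of_smul_rpow_eq_smul_rpow (hp : 0 < p) (hc : c ≠ 0) (ha : 0 ≤ a)
    (h : c • a ^ p = d • b ^ q) : Commute a b := by
  have b_rpow_commute : Commute (b ^ q) b := (Commute.refl b).cfc_nnreal _
  have smul_commute : Commute (c • a ^ p) b := h ▸ b_rpow_commute.smul_left d
  have : Commute (a ^ p) b := (Commute.smul_left_iff₀ hc).1 smul_commute
  exact commute_of_commute_rpow hp ha this

end Commute

section PolarDecomposition

open scoped MatrixOrder

variable {𝕜 m n : Type*} [RCLike 𝕜] [Fintype m]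

lemma norm_toEuclideanLin_eq_of_conjTranspose_mul_self_eq [Fintype n] [DecidableEq n]
    {A B : Matrix m n 𝕜} (h : Aᴴ * A = Bᴴ * B) (x : EuclideanSpace 𝕜 n) :
    ‖toEuclideanLin A x‖ = ‖toEuclideanLin B x‖ := by
  have norm_sq_eq (M : Matrix m n 𝕜) :
      ‖toEuclideanLin M x‖ ^ 2 = RCLike.re (inner 𝕜 x (toEuclideanLin (Mᴴ * M) x)) := by
    classical
    rw [norm_sq_eq_re_inner (𝕜 := 𝕜), ← LinearMap.adjoint_inner_right,
      ← toEuclideanLin_conjTranspose_eq_adjoint]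
    simp [toLpLin_apply]
  rw [← sq_eq_sq₀ (norm_nonneg _) (norm_nonneg _), norm_sq_eq, norm_sq_eq, h]

lemma exists_unitaryGroup_mul_eq_of_conjTranspose_mul_self_eq [DecidableEq m] [Finite n]
    {A B : Matrix m n 𝕜} (h : Aᴴ * A = Bᴴ * B) :
    ∃ U : unitaryGroup m 𝕜, (U : Matrix m m 𝕜) * B = A := by
  classical
  cases nonempty_fintype n
  obtain ⟨L, hL⟩ := exists_linearIsometry_comp_eq_of_norm_eq
    (norm_toEuclideanLin_eq_of_conjTranspose_mul_self_eq h)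
  let Φ := toEuclideanCLM (n := m) (𝕜 := 𝕜)
  obtain ⟨U, hU⟩ : ∃ U, Φ U = L.toContinuousLinearMap := EquivLike.surjective Φ _
  have star_U_mul_U : star U * U = 1 := EquivLike.injective Φ <| by
    rw [map_mul, map_star, map_one, hU]
    exact (ContinuousLinearMap.norm_map_iff_adjoint_comp_self _).1 L.norm_map
  refine ⟨⟨U, mem_unitaryGroup_iff'.2 star_U_mul_U⟩, toEuclideanLin.injective ?_⟩
  ext1 x
  calc toEuclideanLin (U * B) x = Φ U (toEuclideanLin B x) := by
        simp [Φ, toLpLin_apply, toEuclideanCLM_toLp]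
    _ = toEuclideanLin A x := by rw [hU]; exact hL x

variable [Fintype n] [DecidableEq n]

lemma exists_unitaryGroup_mul_abs_eq (A : Matrix n n 𝕜) :
    ∃ U : unitaryGroup n 𝕜, (U : Matrix n n 𝕜) * CFC.abs A = A :=
  exists_unitaryGroup_mul_eq_of_conjTranspose_mul_self_eq <| by
    rw [(CFC.abs_nonneg A).isSelfAdjoint.isHermitian.eq, CFC.abs_mul_abs, star_eq_conjTranspose]

lemma exists_unitaryGroup_trace_abs_mul_conjTranspose_eq (A B : Matrix n n 𝕜) :
    ∃ T : unitaryGroup n 𝕜,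
      (CFC.abs (A * Bᴴ)).trace = (CFC.abs A * CFC.abs B * (T : Matrix n n 𝕜)).trace := by
  obtain ⟨U, hU⟩ := exists_unitaryGroup_mul_abs_eq A
  obtain ⟨V, hV⟩ := exists_unitaryGroup_mul_abs_eq B
  obtain ⟨W, hW⟩ := exists_unitaryGroup_mul_abs_eq (A * Bᴴ)
  have conjTranspose_B : Bᴴ = CFC.abs B * star (V : Matrix n n 𝕜) := by
    rw [← congrArg conjTranspose hV, conjTranspose_mul,
      (CFC.abs_nonneg B).isSelfAdjoint.isHermitian.eq, star_eq_conjTranspose]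
  have abs_mul_conjTranspose : CFC.abs (A * Bᴴ) = star (W : Matrix n n 𝕜) * (A * Bᴴ) := by
    rw [← congrArg (star (W : Matrix n n 𝕜) * ·) hW, ← Matrix.mul_assoc,
      UnitaryGroup.star_mul_self, Matrix.one_mul]
  refine ⟨star V * star W * U, ?_⟩
  calc (CFC.abs (A * Bᴴ)).trace
      = (star (W : Matrix n n 𝕜) *
          (U * CFC.abs A * (CFC.abs B * star (V : Matrix n n 𝕜)))).trace := by
        rw [abs_mul_conjTranspose, hU, ← conjTranspose_B]
    _ = (star (W : Matrix n n 𝕜) * U *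
          (CFC.abs A * CFC.abs B * star (V : Matrix n n 𝕜))).trace := by
        simp only [Matrix.mul_assoc]
    _ = (CFC.abs A * CFC.abs B * (star V * star W * U : unitaryGroup n 𝕜)).trace := by
        rw [trace_mul_comm]
        simp [Matrix.mul_assoc]

end PolarDecomposition

section TraceInequality

open scoped MatrixOrder

variable {𝕜 n : Type*} [RCLike 𝕜]

/-- The matrix of squared moduli of the entries of `U`, which is doubly stochastic when `U` is
unitary. -/
def unistochastic (U : Matrix n n 𝕜) : Matrix n n ℝ := of fun i j ↦ ‖U i j‖ ^ 2

lemma midpoint_unistochastic_apply (S T : Matrix n n 𝕜) (i j : n) :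
    midpoint ℝ (unistochastic S) (unistochastic T)ᵀ i j = (‖S i j‖ ^ 2 + ‖T j i‖ ^ 2) / 2 := by
  simp [midpoint_eq_smul_add, unistochastic, div_eq_inv_mul]

lemma midpoint_unistochastic_apply_ne_zero {S : Matrix n n 𝕜} {i j : n} (hij : S i j ≠ 0)
    (T : Matrix n n 𝕜) : midpoint ℝ (unistochastic S) (unistochastic T)ᵀ i j ≠ 0 := by
  rw [midpoint_unistochastic_apply]
  positivity

variable [Fintype n] [DecidableEq n]

lemma unistochastic_mem_doublyStochastic (U : unitaryGroup n 𝕜) :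
    unistochastic (U : Matrix n n 𝕜) ∈ doublyStochastic ℝ n := by
  have row_sum (V : unitaryGroup n 𝕜) (i : n) : ∑ j, ‖(V : Matrix n n 𝕜) i j‖ ^ 2 = 1 := by
    have h := congrFun₂ (mem_unitaryGroup_iff.1 V.2) i i
    simp only [mul_apply, star_apply, RCLike.star_def, RCLike.mul_conj, one_apply_eq] at h
    exact_mod_cast h
  refine mem_doublyStochastic_iff_sum.2 ⟨fun i j ↦ sq_nonneg _, row_sum U, fun j ↦ ?_⟩
  simpa [unistochastic] using row_sum (star U) j

lemma midpoint_unistochastic_mem_doublyStochastic (S T : unitaryGroup n 𝕜) :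
    midpoint ℝ (unistochastic (S : Matrix n n 𝕜)) (unistochastic (T : Matrix n n 𝕜))ᵀ ∈
      doublyStochastic ℝ n :=
  convex_doublyStochastic.midpoint_mem (unistochastic_mem_doublyStochastic S)
    (transpose_mem_doublyStochastic_iff.2 (unistochastic_mem_doublyStochastic T))

lemma re_trace_diagonal_mul_mul_diagonal_mul_le {α β : n → ℝ} (hα : ∀ i, 0 ≤ α i)
    (hβ : ∀ j, 0 ≤ β j) (S T : Matrix n n 𝕜) :
    RCLike.re (diagonal (fun i ↦ (α i : 𝕜)) * S * diagonal (fun j ↦ (β j : 𝕜)) * T).trace ≤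
      ∑ i, ∑ j, midpoint ℝ (unistochastic S) (unistochastic T)ᵀ i j * (α i * β j) := by
  simp only [trace, diag_apply, mul_apply (N := T), mul_diagonal, diagonal_mul, map_sum,
    midpoint_unistochastic_apply]
  refine Finset.sum_le_sum fun i _ ↦ Finset.sum_le_sum fun j _ ↦ ?_
  calc RCLike.re (α i * S i j * β j * T j i) ≤ ‖(α i * S i j * β j * T j i : 𝕜)‖ :=
        RCLike.re_le_norm _
    _ = ‖S i j‖ * ‖T j i‖ * (α i * β j) := by
        simp only [norm_mul, RCLike.norm_of_nonneg (hα i), RCLike.norm_of_nonneg (hβ j)]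
        ring
    _ ≤ (‖S i j‖ ^ 2 + ‖T j i‖ ^ 2) / 2 * (α i * β j) := by
        refine mul_le_mul_of_nonneg_right ?_ (mul_nonneg (hα i) (hβ j))
        linarith [two_mul_le_add_sq ‖S i j‖ ‖T j i‖]

variable {A B : Matrix n n 𝕜} {p q : ℝ}

/-- The change-of-basis matrix between eigenbases of two Hermitian matrices: its `(i, j)` entry is
the inner product of the `i`-th eigenvector of `A` with the `j`-th eigenvector of `B`. -/
noncomputable def eigenvectorTransition (hA : A.IsHermitian) (hB : B.IsHermitian) :
    unitaryGroup n 𝕜 :=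
  star hA.eigenvectorUnitary * hB.eigenvectorUnitary

lemma exists_unitaryGroup_trace_mul_mul_eq (hA : A.IsHermitian) (hB : B.IsHermitian)
    (U : unitaryGroup n 𝕜) :
    ∃ T : unitaryGroup n 𝕜, (A * B * (U : Matrix n n 𝕜)).trace =
      (diagonal (fun i ↦ (hA.eigenvalues i : 𝕜)) * (eigenvectorTransition hA hB : Matrix n n 𝕜) *
        diagonal (fun j ↦ (hB.eigenvalues j : 𝕜)) * (T : Matrix n n 𝕜)).trace := by
  refine ⟨star hB.eigenvectorUnitary * U * hA.eigenvectorUnitary, ?_⟩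
  conv_lhs => rw [hA.spectral_theorem, hB.spectral_theorem]
  simp only [Unitary.conjStarAlgAut_apply, Matrix.mul_assoc]
  rw [trace_mul_comm]
  simp [Matrix.mul_assoc, eigenvectorTransition, Function.comp_def]

lemma cfc_eq_mul_diagonal_mul_star (hA : A.IsHermitian) (f : ℝ → ℝ) :
    cfc f A = (hA.eigenvectorUnitary : Matrix n n 𝕜) *
      diagonal (fun i ↦ (f (hA.eigenvalues i) : 𝕜)) *
        star (hA.eigenvectorUnitary : Matrix n n 𝕜) :=
  hA.cfc_eq f

lemma trace_cfc (hA : A.IsHermitian) (f : ℝ → ℝ) :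
    (cfc f A).trace = ∑ i, (f (hA.eigenvalues i) : 𝕜) := by
  rw [cfc_eq_mul_diagonal_mul_star hA, trace_mul_cycle, UnitaryGroup.star_mul_self, Matrix.one_mul,
    trace_diagonal]

lemma cfc_eq_cfc_of_eigenvectorTransition (hA : A.IsHermitian) (hB : B.IsHermitian)
    {f g : ℝ → ℝ} (h : ∀ i j, (eigenvectorTransition hA hB : Matrix n n 𝕜) i j ≠ 0 →
      f (hA.eigenvalues i) = g (hB.eigenvalues j)) :
    cfc f A = cfc g B := by
  let V : Matrix n n 𝕜 := hA.eigenvectorUnitary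
  let W : Matrix n n 𝕜 := hB.eigenvectorUnitary
  let D : Matrix n n 𝕜 := diagonal fun i ↦ (f (hA.eigenvalues i) : 𝕜)
  let E : Matrix n n 𝕜 := diagonal fun j ↦ (g (hB.eigenvalues j) : 𝕜)
  have intertwine : D * (star V * W) = star V * W * E := by
    ext i j
    rw [diagonal_mul, mul_diagonal, mul_comm]
    by_cases hij : (star V * W) i j = 0
    · rw [hij, zero_mul, zero_mul]
    · rw [h i j hij]
  calc cfc f A = V * (D * (star V * W)) * star W := by
        rw [cfc_eq_mul_diagonal_mul_star hA]
        simp [Matrix.mul_assoc, V, W, D]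
    _ = V * (star V * W * E) * star W := by rw [intertwine]
    _ = cfc g B := by
        rw [cfc_eq_mul_diagonal_mul_star hB]
        simp [← Matrix.mul_assoc, V, W, E]

lemma re_trace_rpow (hA : A.PosSemidef) :
    RCLike.re (A ^ p).trace = ∑ i, hA.isHermitian.eigenvalues i ^ p := by
  simp [CFC.rpow_eq_cfc_real hA.nonneg, trace_cfc hA.isHermitian]

lemma re_trace_rpow_pos (hA : A.PosSemidef) (hA_ne : A ≠ 0) : 0 < RCLike.re (A ^ p).trace := by
  obtain ⟨i, hi⟩ := Function.ne_iff.1 (hA.isHermitian.eigenvalues_eq_zero_iff.not.2 hA_ne)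
  rw [re_trace_rpow hA]
  exact Finset.sum_pos' (fun i _ ↦ Real.rpow_nonneg (hA.eigenvalues_nonneg i) p)
    ⟨i, Finset.mem_univ i, Real.rpow_pos_of_pos ((hA.eigenvalues_nonneg i).lt_of_ne' hi) p⟩

lemma smul_rpow_eq_cfc (hA : A.PosSemidef) (c p : ℝ) :
    c • A ^ p = cfc (fun t : ℝ ↦ c * t ^ p) A := by
  rw [CFC.rpow_eq_cfc_real hA.nonneg]
  exact (cfc_const_mul c _ A (A.finite_real_spectrum.continuousOn _)).symm

lemma re_trace_smul_rpow_eq_of_le_re_trace_mul (hA : A.PosSemidef) (hB : B.PosSemidef)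
    (hpq : p.HolderConjugate q) {U : unitaryGroup n 𝕜}
    (h : RCLike.re (A ^ p).trace ^ p⁻¹ * RCLike.re (B ^ q).trace ^ q⁻¹ ≤
      RCLike.re (A * B * (U : Matrix n n 𝕜)).trace) :
    RCLike.re (B ^ q).trace • A ^ p = RCLike.re (A ^ p).trace • B ^ q := by
  obtain ⟨T, hT⟩ := exists_unitaryGroup_trace_mul_mul_eq hA.isHermitian hB.isHermitian U
  let S := eigenvectorTransition hA.isHermitian hB.isHermitian
  rw [hT, re_trace_rpow hA, re_trace_rpow hB] at h
  have le_sum := h.trans (re_trace_diagonal_mul_mul_diagonal_mul_le hA.eigenvalues_nonneg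
    hB.eigenvalues_nonneg (S : Matrix n n 𝕜) T)
  rw [smul_rpow_eq_cfc hA, smul_rpow_eq_cfc hB, re_trace_rpow hA, re_trace_rpow hB]
  exact cfc_eq_cfc_of_eigenvectorTransition hA.isHermitian hB.isHermitian fun i j hij ↦
    sum_rpow_mul_rpow_eq_of_le_sum_mul (midpoint_unistochastic_mem_doublyStochastic S T) hpq
      hA.eigenvalues_nonneg hB.eigenvalues_nonneg le_sum
      (midpoint_unistochastic_apply_ne_zero hij T)

/-- The Schatten `r`-norm of a square matrix over `ℝ` or `ℂ` with rows and columns indexed by any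
finite type. -/
noncomputable def schattenNorm (r : ℝ) (A : Matrix n n 𝕜) : ℝ :=
  RCLike.re (CFC.abs A ^ r).trace ^ r⁻¹

lemma schattenNorm_one (A : Matrix n n 𝕜) :
    schattenNorm 1 A = RCLike.re (CFC.abs A).trace := by
  rw [schattenNorm, CFC.rpow_one _ (CFC.abs_nonneg A), inv_one, Real.rpow_one]

lemma schatten_eq_schattenNorm {k : ℕ} (r : ℝ) (x : Matrix (Fin k) (Fin k) ℂ) :
    schatten r x = schattenNorm r x := by
  rw [schatten, schattenNorm, one_div, CFC.rpow_eq_cfc_real (CFC.abs_nonneg x)]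
  rfl

theorem holder_equality_abs_commute_general (hpq : p.HolderConjugate q)
    (h : schattenNorm 1 (A * Bᴴ) = schattenNorm p A * schattenNorm q B) :
    Commute (CFC.abs A) (CFC.abs B) := by
  obtain hB_zero | hB_ne := eq_or_ne (CFC.abs B) 0
  · rw [hB_zero]
    exact Commute.zero_right _
  have hA : (CFC.abs A).PosSemidef := (CFC.abs_nonneg A).posSemidef
  have hB : (CFC.abs B).PosSemidef := (CFC.abs_nonneg B).posSemidef
  obtain ⟨U, hU⟩ := exists_unitaryGroup_trace_abs_mul_conjTranspose_eq A B
  rw [schattenNorm_one, hU] at h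
  exact commute_of_smul_rpow_eq_smul_rpow hpq.pos (re_trace_rpow_pos hB hB_ne).ne' hA.nonneg
    (re_trace_smul_rpow_eq_of_le_re_trace_mul hA hB hpq h.ge)

end TraceInequality

theorem holder_equality_abs_commute {n : ℕ} (hn : 1 ≤ n)
    (a b : Matrix (Fin n) (Fin n) ℂ) (ha : a ≠ 0) (hb : b ≠ 0) (p q : ℝ)
    (hp : 1 < p) (hq : 1 < q) (hpq : 1 / p + 1 / q = 1)
    (heq : schatten 1 (a * bᴴ) = schatten p a * schatten q b) :
    matAbs a * matAbs b = matAbs b * matAbs a := by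
  simp only [schatten_eq_schattenNorm] at heq
  exact holder_equality_abs_commute_general
    (Real.holderConjugate_iff.2 ⟨hp, by simpa only [one_div] using hpq⟩) heq
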